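/- With W, δ, e, N, M and W_δ as in the context, dim_H(W_δ) = δ. -/

import Mathlib

open Metric Set Filter MeasureTheory

noncomputable local instance : MetricSpace (ℕ → Bool) := PiNat.metricSpace

/-- The set `A` of natural numbers has asymptotic density `α`. -/
def HasDensity (A : Set ℕ) (α : ℝ) : Prop :=
  Tendsto (fun n : ℕ => ((A ∩ Iic n).ncard : ℝ) / (n + 1)) atTop (nhds α)

theorem HasDensity.union {A B : Set ℕ} {α β : ℝ} (hA : HasDensity A α) (hB : HasDensity B β)
    (h : Disjoint A B) : HasDensity (A ∪ B) (α + β) := by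
  refine (Tendsto.add hA hB).congr fun n => ?_
  rw [union_inter_distrib_right, ncard_union_eq (h.mono inter_subset_left inter_subset_left)
    ((finite_Iic n).inter_of_right _) ((finite_Iic n).inter_of_right _)]
  push_cast
  ring

/-- Changing a set on a set of density zero does not change its density. -/
theorem HasDensity.congr {A B N : Set ℕ} {α : ℝ} (hA : HasDensity A α) (hN : HasDensity N 0)
    (hAB : A ⊆ B ∪ N) (hBA : B ⊆ A ∪ N) : HasDensity B α := by
  have key : ∀ {C D : Set ℕ} (n : ℕ), C ⊆ D ∪ N →
      ((C ∩ Iic n).ncard : ℝ) ≤ (D ∩ Iic n).ncard + (N ∩ Iic n).ncard := by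
    intro C D n h
    have h' : C ∩ Iic n ⊆ (D ∩ Iic n) ∪ (N ∩ Iic n) := by
      rw [← union_inter_distrib_right]
      exact inter_subset_inter_left _ h
    exact_mod_cast (ncard_le_ncard h' (((finite_Iic n).inter_of_right _).union
      ((finite_Iic n).inter_of_right _))).trans (ncard_union_le _ _)
  have hlow : Tendsto (fun n : ℕ => ((A ∩ Iic n).ncard : ℝ) / (n + 1)
      - ((N ∩ Iic n).ncard : ℝ) / (n + 1)) atTop (nhds α) := by
    simpa using Tendsto.sub hA hN
  have hupp : Tendsto (fun n : ℕ => ((A ∩ Iic n).ncard : ℝ) / (n + 1)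
      + ((N ∩ Iic n).ncard : ℝ) / (n + 1)) atTop (nhds α) := by
    simpa using Tendsto.add hA hN
  refine tendsto_of_tendsto_of_tendsto_of_le_of_le hlow hupp (fun n => ?_) (fun n => ?_)
  · dsimp only
    rw [← sub_div]
    gcongr
    linarith [key n hAB]
  · dsimp only
    rw [← add_div]
    gcongr
    exact key n hBA

theorem hasDensity_odd : HasDensity {k | Odd k} (1 / 2) := by
  have hcard : ∀ n : ℕ, ({k | Odd k} ∩ Iic n).ncard = (n + 1) / 2 := by
    intro n
    have : {k | Odd k} ∩ Iic n = (fun k => 2 * k + 1) '' (Finset.range ((n + 1) / 2) : Set ℕ) := by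
      ext k
      simp only [mem_inter_iff, mem_ofPred_eq, mem_Iic, mem_image, Finset.coe_range, mem_Iio]
      constructor
      · rintro ⟨⟨j, rfl⟩, h⟩
        exact ⟨j, by omega, rfl⟩
      · rintro ⟨j, hj, rfl⟩
        exact ⟨⟨j, rfl⟩, by omega⟩
    rw [this, ncard_image_of_injective _ (fun a b h => by simpa using h), ncard_coe_finset,
      Finset.card_range]
  have h := (tendsto_nat_floor_mul_div_atTop (R := ℝ) (a := 1 / 2) (by norm_num)).comp
    ((tendsto_natCast_atTop_atTop (R := ℝ)).comp (tendsto_add_atTop_nat 1))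
  refine h.congr fun n => ?_
  have h2 : (1 / 2 : ℝ) * ((n + 1 : ℕ) : ℝ) = ((n + 1 : ℕ) : ℝ) / (2 : ℕ) := by
    push_cast
    ring
  simp only [Function.comp_apply]
  rw [hcard, h2, Nat.floor_div_eq_div]
  push_cast
  rfl

open scoped Classical in
theorem ncard_inter_Iic (A : Set ℕ) (n : ℕ) :
    (A ∩ Iic n).ncard = ((Finset.range (n + 1)).filter (· ∈ A)).card := by
  rw [← ncard_coe_finset]
  congr 1
  ext k
  simp only [mem_inter_iff, mem_Iic, Finset.coe_filter, Finset.mem_range, mem_ofPred_eq,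
    Order.lt_add_one_iff]
  exact and_comm

/-- The binary sequences that vanish outside `A`. -/
def supportedSeqs (A : Set ℕ) : Set (ℕ → Bool) := {x | ∀ k ∉ A, x k = false}

theorem ediam_le_of_subset_cylinder {s : Set (ℕ → Bool)} {n : ℕ}
    (h : ∀ x ∈ s, ∀ y ∈ s, y ∈ PiNat.cylinder x n) :
    ediam s ≤ ENNReal.ofReal ((1 / 2) ^ n) := by
  refine ediam_le fun x hx y hy => ?_
  rw [edist_dist]
  exact ENNReal.ofReal_le_ofReal
    ((PiNat.mem_cylinder_iff_dist_le (E := fun _ => Bool)).1 (h y hy x hx))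

theorem subset_cylinder_of_ediam_le {s : Set (ℕ → Bool)} {n : ℕ}
    (h : ediam s ≤ ENNReal.ofReal ((1 / 2) ^ n)) {x : ℕ → Bool} (hx : x ∈ s) :
    s ⊆ PiNat.cylinder x n := by
  intro y hy
  have h' := (edist_le_ediam_of_mem hy hx).trans h
  rw [edist_dist, ENNReal.ofReal_le_ofReal_iff (by positivity)] at h'
  exact (PiNat.mem_cylinder_iff_dist_le (E := fun _ => Bool)).2 h'

/-- A set of binary sequences with at least two points has diameter a power of `1 / 2`. -/
theorem exists_ediam_eq {s : Set (ℕ → Bool)} (hs : s.Nontrivial) :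
    ∃ n : ℕ, ediam s = ENNReal.ofReal ((1 / 2) ^ n) := by
  classical
  have hex : ∃ n, ∃ x ∈ s, ∃ y ∈ s, x n ≠ y n := by
    obtain ⟨x, hx, y, hy, hxy⟩ := hs
    obtain ⟨n, hn⟩ := Function.ne_iff.1 hxy
    exact ⟨n, x, hx, y, hy, hn⟩
  refine ⟨Nat.find hex, le_antisymm (ediam_le_of_subset_cylinder ?_) ?_⟩
  · intro x hx y hy i hi
    by_contra hne
    exact Nat.find_min hex hi ⟨y, hy, x, hx, hne⟩
  · obtain ⟨x, hx, y, hy, hxy⟩ := Nat.find_spec hex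
    refine le_trans ?_ (edist_le_ediam_of_mem hx hy)
    rw [edist_dist]
    refine ENNReal.ofReal_le_ofReal ?_
    have hne : x ≠ y := fun h => hxy (congrFun h _)
    refine (PiNat.dist_eq_of_ne (E := fun _ => Bool) hne).symm ▸ ?_
    refine pow_le_pow_of_le_one (by norm_num) (by norm_num) ?_
    by_contra hlt
    exact hxy (PiNat.apply_eq_of_lt_firstDiff (not_le.1 hlt))

theorem ofReal_half_pow_rpow (n : ℕ) (d : ℝ) :
    ENNReal.ofReal ((1 / 2) ^ n) ^ d = ENNReal.ofReal ((1 / 2 : ℝ) ^ (d * n)) := by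
  rw [ENNReal.ofReal_rpow_of_pos (by positivity), ← Real.rpow_natCast,
    ← Real.rpow_mul (by norm_num), mul_comm]

theorem dimH_supportedSeqs_le {A : Set ℕ} {α : ℝ} (hA : HasDensity A α) :
    dimH (supportedSeqs A) ≤ ENNReal.ofReal α := by
  classical
  have hα : 0 ≤ α := ge_of_tendsto' hA fun n => by positivity
  refine ENNReal.le_of_forall_pos_le_add fun ε hε _ => ?_
  set d : NNReal := α.toNNReal + ε with hd
  have hαd : α < d := by
    rw [hd]
    push_cast
    rw [Real.coe_toNNReal _ hα]
    simpa using hε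
  have hcov : (d : ENNReal) = ENNReal.ofReal α + ε := by
    rw [hd]
    push_cast
    rfl
  rw [← hcov]
  let F : ℕ → Finset ℕ := fun n => (Finset.range (n + 1)).filter (· ∈ A)
  have hF : ∀ n, (A ∩ Iic n).ncard = (F n).card := fun n => ncard_inter_Iic A n
  borelize (ℕ → Bool)
  apply dimH_le_of_hausdorffMeasure_ne_top
  let t : ∀ n, {S // S ∈ (F n).powerset} → Set (ℕ → Bool) :=
    fun n S => {x | ∀ k < n + 1, x k = decide (k ∈ S.1)}
  have hdiam : ∀ n S, ediam (t n S) ≤ ENNReal.ofReal ((1 / 2) ^ (n + 1)) := by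
    intro n S
    refine ediam_le_of_subset_cylinder fun x hx y hy k hk => ?_
    rw [hx k hk, hy k hk]
  have hle := Measure.hausdorffMeasure_le_liminf_sum (d := d) (supportedSeqs A)
    (fun n : ℕ => ENNReal.ofReal ((1 / 2) ^ (n + 1)))
    (l := atTop) (by
      rw [← ENNReal.ofReal_zero]
      exact ENNReal.tendsto_ofReal ((tendsto_pow_atTop_nhds_zero_of_lt_one (by norm_num)
        (by norm_num)).comp (tendsto_add_atTop_nat 1))) t
    (Eventually.of_forall hdiam)
    (Eventually.of_forall fun n x hx => by
      rw [mem_iUnion]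
      refine ⟨⟨(F n).filter (fun k => x k = true), by simp⟩, fun k hk => ?_⟩
      by_cases hkA : k ∈ A
      · cases hxk : x k <;> simp [F, hkA, hk, hxk]
      · simp [F, hkA, hx k hkA])
  refine ne_top_of_le_ne_top ENNReal.one_ne_top (hle.trans ?_)
  refine liminf_le_of_frequently_le' (Eventually.frequently ?_)
  filter_upwards [Tendsto.eventually_lt_const hαd hA] with n hn
  rw [div_lt_iff₀ (by positivity), hF] at hn
  calc ∑ S, ediam (t n S) ^ (d : ℝ)
      ≤ ∑ _S : {S // S ∈ (F n).powerset}, ENNReal.ofReal ((1 / 2 : ℝ) ^ ((F n).card : ℝ)) := by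
        refine Finset.sum_le_sum fun S _ => ?_
        refine (ENNReal.rpow_le_rpow (hdiam n S) d.2).trans ?_
        rw [ofReal_half_pow_rpow]
        refine ENNReal.ofReal_le_ofReal
          (Real.rpow_le_rpow_of_exponent_ge (by norm_num) (by norm_num) ?_)
        push_cast
        exact hn.le
    _ = 1 := by
        rw [Finset.sum_const, Finset.card_univ, Fintype.card_coe, Finset.card_powerset,
          nsmul_eq_mul, Real.rpow_natCast, ENNReal.ofReal_pow (by norm_num)]
        push_cast
        rw [← mul_pow, one_div, ENNReal.ofReal_inv_of_pos (by norm_num)]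
        simp [ENNReal.mul_inv_cancel]

open scoped Classical in
/-- The law of one coordinate: a fair coin on `A`, constantly `false` off `A`. -/
noncomputable def coinOn (A : Set ℕ) (k : ℕ) : Measure Bool :=
  if k ∈ A then (PMF.uniformOfFintype Bool).toMeasure else Measure.dirac false

instance isProbabilityMeasure_coinOn (A : Set ℕ) (k : ℕ) : IsProbabilityMeasure (coinOn A k) := by
  unfold coinOn
  split_ifs <;> infer_instance

theorem infinitePi_coinOn_cylinder_le (A : Set ℕ) (x : ℕ → Bool) (n : ℕ) :
    Measure.infinitePi (coinOn A) (PiNat.cylinder x (n + 1))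
      ≤ ENNReal.ofReal ((1 / 2 : ℝ) ^ ((A ∩ Iic n).ncard : ℝ)) := by
  classical
  rw [PiNat.cylinder_eq_pi, Measure.infinitePi_pi _ (fun i _ => measurableSet_singleton _)]
  calc ∏ k ∈ Finset.range (n + 1), coinOn A k {x k}
      ≤ ∏ k ∈ Finset.range (n + 1), if k ∈ A then ENNReal.ofReal (1 / 2) else 1 := by
        refine Finset.prod_le_prod' fun k _ => ?_
        split_ifs with hk
        · simp [coinOn, hk, ENNReal.ofReal_inv_of_pos]
        · exact prob_le_one
    _ = ENNReal.ofReal ((1 / 2 : ℝ) ^ ((A ∩ Iic n).ncard : ℝ)) := by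
        rw [← Finset.prod_filter, Finset.prod_const, ncard_inter_Iic, Real.rpow_natCast,
          ENNReal.ofReal_pow (by norm_num)]

theorem infinitePi_coinOn_supportedSeqs (A : Set ℕ) :
    Measure.infinitePi (coinOn A) (supportedSeqs A) = 1 := by
  have hae : ∀ᵐ x ∂Measure.infinitePi (coinOn A), x ∈ supportedSeqs A := by
    refine ae_all_iff.2 fun k => ?_
    by_cases hk : k ∈ A
    · simp [hk]
    · have h : ∀ᵐ b ∂coinOn A k, b = false := by
        simp [coinOn, hk]
      rw [← Measure.infinitePi_map_eval (coinOn A) k] at h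
      filter_upwards [ae_of_ae_map (measurable_pi_apply k).aemeasurable h] with x hx _ using hx
  exact (measure_congr (eventuallyEq_univ.2 hae)).trans measure_univ

theorem le_dimH_supportedSeqs {A : Set ℕ} {α : ℝ} (hA : HasDensity A α) :
    ENNReal.ofReal α ≤ dimH (supportedSeqs A) := by
  refine ENNReal.le_of_forall_nnreal_lt fun d hd => ?_
  rcases eq_or_ne d 0 with rfl | hd0
  · simp
  have hdα : (d : ℝ) < α := by
    rw [ENNReal.lt_ofReal_iff_toReal_lt ENNReal.coe_ne_top] at hd
    simpa using hd
  obtain ⟨n₀, hn₀⟩ := eventually_atTop.1 (Tendsto.eventually_const_lt hdα hA)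
  set μ := Measure.infinitePi (coinOn A) with hμ
  have hcyl : ∀ x : ℕ → Bool, ∀ n ≥ n₀ + 1, μ (PiNat.cylinder x n)
      ≤ ENNReal.ofReal ((1 / 2) ^ n) ^ (d : ℝ) := by
    intro x n hn
    obtain ⟨m, rfl⟩ := Nat.exists_eq_add_of_le' (Nat.one_le_of_lt hn)
    refine (infinitePi_coinOn_cylinder_le A x m).trans ?_
    rw [ofReal_half_pow_rpow]
    refine ENNReal.ofReal_le_ofReal
      (Real.rpow_le_rpow_of_exponent_ge (by norm_num) (by norm_num) ?_)
    have := hn₀ m (by omega)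
    rw [lt_div_iff₀ (by positivity)] at this
    push_cast
    exact this.le
  have hzero : Tendsto (fun n : ℕ => ENNReal.ofReal ((1 / 2) ^ n) ^ (d : ℝ)) atTop (nhds 0) := by
    have h1 : Tendsto (fun n : ℕ => ENNReal.ofReal ((1 / 2) ^ n)) atTop (nhds 0) := by
      rw [← ENNReal.ofReal_zero]
      exact ENNReal.tendsto_ofReal
        (tendsto_pow_atTop_nhds_zero_of_lt_one (by norm_num) (by norm_num))
    have hd' : (0 : ℝ) < d := by positivity
    simpa [ENNReal.zero_rpow_of_pos hd'] using h1.ennrpow_const (d : ℝ)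
  have : BorelSpace (ℕ → Bool) := Pi.borelSpace
  have hle : μ ≤ μH[d] := by
    refine Measure.le_hausdorffMeasure d μ (ENNReal.ofReal ((1 / 2) ^ (n₀ + 1)))
      (by positivity) fun s hs => ?_
    rcases s.subsingleton_or_nontrivial with hss | hnt
    · rcases hss.eq_empty_or_singleton with rfl | ⟨x, rfl⟩
      · simp
      · have : μ {x} ≤ 0 := by
          refine ge_of_tendsto hzero ?_
          filter_upwards [eventually_ge_atTop (n₀ + 1)] with n hn
          exact (measure_mono (by simp)).trans (hcyl x n hn)
        exact this.trans zero_le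
    · obtain ⟨n, hn⟩ := exists_ediam_eq hnt
      obtain ⟨x, hx⟩ := hnt.nonempty
      rw [hn]
      refine (measure_mono (subset_cylinder_of_ediam_le hn.le hx)).trans (hcyl x n ?_)
      rw [hn, ENNReal.ofReal_le_ofReal_iff (by positivity)] at hs
      exact (pow_le_pow_iff_right_of_lt_one₀ (by norm_num) (by norm_num)).1 hs
  apply le_dimH_of_hausdorffMeasure_ne_zero
  refine ((one_pos.trans_le ?_).ne' : μH[d] (supportedSeqs A) ≠ 0)
  rw [← infinitePi_coinOn_supportedSeqs A]
  exact hle _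

/-- With the setup of Definition `W_δ`, the set `W_δ` has Hausdorff dimension `δ`. -/
theorem dimH_Wdelta (δ : ℝ) (hδ : δ ∈ Set.Icc (1 / 2 : ℝ) 1)
    (e : ℕ → ℕ) (he : StrictMono e)
    (heEven : ∀ ℓ : ℕ, Even (e (2 * ℓ)) ∧ e (2 * ℓ + 1) = e (2 * ℓ) + 1)
    (hN : Tendsto (fun n : ℕ => ((Set.range e ∩ Set.Iic n).ncard : ℝ) / (n + 1))
      atTop (nhds 0))
    (M : Set ℕ) (hMinf : M.Infinite) (hMeven : ∀ k ∈ M, Even k)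
    (hMN : Disjoint M (Set.range e))
    (hM : Tendsto (fun n : ℕ => ((M ∩ Set.Iic n).ncard : ℝ) / (n + 1))
      atTop (nhds (δ - 1 / 2)))
    (W : Set (ℕ → Bool)) (hW0 : (fun _ => false) ∈ W)
    (Wδ : Set (ℕ → Bool))
    (hWδ : Wδ = {x : ℕ → Bool |
      (∀ k : ℕ, Even k → k ∉ M ∪ Set.range e → x k = false) ∧ (fun k => x (e k)) ∈ W}) :
    dimH Wδ = ENNReal.ofReal δ := by
  have hOM : HasDensity ({k | Odd k} ∪ M) δ := by
    have h := hasDensity_odd.union (B := M) hM (disjoint_left.2 fun k hk hkM =>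
      Nat.not_even_iff_odd.2 hk (hMeven k hkM))
    rwa [add_sub_cancel] at h
  subst hWδ
  refine le_antisymm ?_ ?_
  · have hA : HasDensity ({k | Odd k} ∪ M ∪ range e) δ :=
      hOM.congr hN (by grind) (by grind)
    refine (dimH_mono fun x hx k hk => ?_).trans (dimH_supportedSeqs_le hA)
    simp only [mem_union, mem_ofPred_eq, not_or] at hk
    exact hx.1 k (Nat.not_odd_iff_even.1 hk.1.1) fun h => h.elim hk.1.2 hk.2
  · have hB : HasDensity (({k | Odd k} ∪ M) \ range e) δ :=
      hOM.congr hN (by grind) (by grind)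
    refine (le_dimH_supportedSeqs hB).trans (dimH_mono fun x hx => ⟨fun k hk hkMN => ?_, ?_⟩)
    · refine hx k fun h => ?_
      rcases h.1 with h' | h'
      · exact Nat.not_even_iff_odd.2 h' hk
      · exact hkMN (Or.inl h')
    · have h0 : (fun k => x (e k)) = fun _ => false :=
        funext fun k => hx _ fun h => h.2 (mem_range_self k)
      rwa [h0]
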